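/- In the CreditRisk⁺ model, for every nonnegative integer t one has P_α[L = t] > 0 if and only if there exists an n-tuple (u₁,…,u_n) of nonnegative integers with Σ_{j=1}^n ν_j u_j = t. -/

import Mathlib

/-!
Conditionally on the factors the loss law is driven by independent Poisson counts, and a Poisson
law with positive mean charges every natural number. The gamma factors are almost surely positive
and every column of `r` has a positive entry, so almost surely all intensities are positive and
every attainable loss has positive conditional probability; integrating over the factors keeps it
positive.
-/

open MeasureTheory ProbabilityTheory Real

noncomputable section

/-- The gamma measure is sigma-finite (needed to form product measures). -/
instance gammaMeasure.instSigmaFinite (a r : ℝ) :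
    SigmaFinite (gammaMeasure a r) := by
  unfold ProbabilityTheory.gammaMeasure ProbabilityTheory.gammaPDF
  infer_instance

/-- Conditional Poisson intensity `R_i(s) = r_{0,i} S_0 + sum_j r_{j,i} s_j`. -/
def crpR {n k : ℕ} (S0 : ℝ) (r0 : Fin n → ℝ) (r : Fin k → Fin n → ℝ)
    (s : Fin k → ℝ) (i : Fin n) : ℝ :=
  r0 i * S0 + ∑ j, r j i * s j

/-- The CreditRisk⁺ measure `P_α` on `(Fin k → ℝ) × (Fin n → ℕ)`: the product of the
Gamma factor measures (shape `α j`, scale `β j`, i.e. rate `(β j)⁻¹`), composed with the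
kernel sending the factor vector `s` to the product of Poisson measures with means `R_i(s)`,
recorded jointly with `s`. -/
def crpMeasure {n k : ℕ} (S0 : ℝ) (r0 : Fin n → ℝ) (r : Fin k → Fin n → ℝ)
    (α β : Fin k → ℝ) : Measure ((Fin k → ℝ) × (Fin n → ℕ)) :=
  (Measure.pi fun j => gammaMeasure (α j) (β j)⁻¹).bind fun s =>
    (Measure.pi fun i => poissonMeasure (crpR S0 r0 r s i).toNNReal).map fun x => (s, x)

/-- Portfolio loss `L = ∑ ν_i N_i`. -/
def crpLoss {n k : ℕ} (ν : Fin n → ℕ) (x : (Fin k → ℝ) × (Fin n → ℕ)) : ℕ :=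
  ∑ i, ν i * x.2 i

/-- Value-at-risk of the ℕ-valued loss `L` at level `δ`: the smallest `l` with
`P[L ≤ l] ≥ δ` (a natural number since `L` is ℕ-valued). -/
def crpVaR {n k : ℕ} (P : Measure ((Fin k → ℝ) × (Fin n → ℕ)))
    (ν : Fin n → ℕ) (δ : ℝ) : ℕ :=
  sInf {l : ℕ | ENNReal.ofReal δ ≤ P {x | crpLoss ν x ≤ l}}

/-- `ρ_g`, the radius of convergence of the probability generating function. -/
def crpRadius {n k : ℕ} (ν : Fin n → ℕ) (r : Fin k → Fin n → ℝ) (β : Fin k → ℝ) : ℝ :=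
  sSup {z : ℝ | 0 < z ∧ ∀ j, ∑ i, r j i * z ^ ν i < 1 + (β j)⁻¹}

open scoped NNReal

section MeasureFamilies

variable {Ω ι : Type*} [MeasurableSpace Ω]

lemma measurable_measure_iff_singleton {β : Type*} [MeasurableSpace β] [Countable β]
    [MeasurableSingletonClass β] {μ : Ω → Measure β} :
    Measurable μ ↔ ∀ b, Measurable fun ω => μ ω {b} := by
  refine ⟨fun h b => (Measure.measurable_coe (measurableSet_singleton b)).comp h,
    fun h => Measure.measurable_of_measurable_coe _ fun A hA => ?_⟩
  simp_rw [← Measure.tsum_indicator_apply_singleton _ A hA]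
  refine Measurable.tsum fun b => ?_
  by_cases hb : b ∈ A <;> simp [hb, h b]

lemma measurable_measure_pi_of_countable [Fintype ι] {X : ι → Type*}
    [∀ i, MeasurableSpace (X i)] [∀ i, Countable (X i)] [∀ i, MeasurableSingletonClass (X i)]
    {μ : Ω → ∀ i, Measure (X i)} [∀ ω i, SigmaFinite (μ ω i)]
    (hμ : ∀ i, Measurable fun ω => μ ω i) :
    Measurable fun ω => Measure.pi (μ ω) := by
  refine measurable_measure_iff_singleton.mpr fun x => ?_
  simp_rw [Measure.pi_singleton]
  exact Finset.measurable_prod _ fun i _ => measurable_measure_iff_singleton.mp (hμ i) (x i)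

lemma compProd_pos_of_frequently_pos {β : Type*} [MeasurableSpace β] {μ : Measure Ω}
    [SFinite μ] {κ : Kernel Ω β} [IsSFiniteKernel κ] {A : Set (Ω × β)}
    (hA : ∃ᵐ ω ∂μ, 0 < κ ω (Prod.mk ω ⁻¹' A)) :
    0 < (μ ⊗ₘ κ) A := by
  refine pos_iff_ne_zero.mpr fun hnull => ?_
  have hsections : ∀ᵐ ω ∂μ, ∀ᵐ x ∂κ ω, (ω, x) ∉ A :=
    Measure.ae_ae_of_ae_compProd (measure_eq_zero_iff_ae_notMem.mp hnull)
  obtain ⟨ω, hω_pos, hω_null⟩ := (hA.and_eventually hsections).exists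
  exact hω_pos.ne' (measure_eq_zero_iff_ae_notMem.mpr hω_null)

end MeasureFamilies

section Poisson

lemma isOpenPosMeasure_poissonMeasure {a : ℝ≥0} (ha : 0 < a) :
    (poissonMeasure a).IsOpenPosMeasure where
  open_pos U _ := by
    rintro ⟨m, hm⟩ hU
    have hm_pos := poissonMeasure_real_singleton_pos m ha
    rw [measureReal_def, measure_mono_null (Set.singleton_subset_iff.mpr hm) hU] at hm_pos
    exact hm_pos.ne' ENNReal.toReal_zero

lemma measurable_poissonMeasure : Measurable poissonMeasure := by
  refine measurable_measure_iff_singleton.mpr fun m => ?_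
  simp_rw [poissonMeasure_singleton]
  fun_prop

variable {Ω ι : Type*} [MeasurableSpace Ω] [Fintype ι]

/-- The law of independent Poisson counts `(N i)` whose means `rate ω i` depend measurably on a
parameter `ω`, as a Markov kernel. -/
def poissonPiKernel (rate : Ω → ι → ℝ≥0) (hrate : Measurable rate) : Kernel Ω (ι → ℕ) where
  toFun ω := Measure.pi fun i => poissonMeasure (rate ω i)
  measurable' := measurable_measure_pi_of_countable fun _ =>
    measurable_poissonMeasure.comp (measurable_pi_iff.mp hrate _)

lemma poissonPiKernel_apply (rate : Ω → ι → ℝ≥0) (hrate : Measurable rate) (ω : Ω) :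
    poissonPiKernel rate hrate ω = Measure.pi fun i => poissonMeasure (rate ω i) :=
  rfl

instance poissonPiKernel.instIsMarkovKernel (rate : Ω → ι → ℝ≥0) (hrate : Measurable rate) :
    IsMarkovKernel (poissonPiKernel rate hrate) :=
  ⟨fun ω => by rw [poissonPiKernel_apply]; infer_instance⟩

lemma poissonPiKernel_pos_of_nonempty {rate : Ω → ι → ℝ≥0} (hrate : Measurable rate) {ω : Ω}
    (hω : ∀ i, 0 < rate ω i) {B : Set (ι → ℕ)} (hB : B.Nonempty) :
    0 < poissonPiKernel rate hrate ω B := by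
  have (i : ι) : (poissonMeasure (rate ω i)).IsOpenPosMeasure :=
    isOpenPosMeasure_poissonMeasure (hω i)
  exact (isOpen_discrete B).measure_pos (Measure.pi fun i => poissonMeasure (rate ω i)) hB

end Poisson

lemma ae_gammaMeasure_pos (a b : ℝ) : ∀ᵐ x ∂gammaMeasure a b, 0 < x := by
  have hpdf : Measurable (gammaPDF a b) := (measurable_gammaPDFReal a b).ennreal_ofReal
  rw [gammaMeasure, ae_withDensity_iff hpdf]
  filter_upwards [Measure.ae_ne volume (0 : ℝ)] with x hx hx_pdf
  by_contra! hx_nonpos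
  exact hx_pdf (gammaPDF_of_neg (hx_nonpos.lt_of_ne hx))

lemma ae_pi_gammaMeasure_pos {ι : Type*} [Fintype ι] (a b : ι → ℝ) :
    ∀ᵐ s ∂Measure.pi fun j => gammaMeasure (a j) (b j), ∀ j, 0 < s j :=
  ae_all_iff.mpr fun j => Measure.tendsto_eval_ae_ae.eventually (ae_gammaMeasure_pos (a j) (b j))

section CreditRisk

variable {n k : ℕ} {S0 : ℝ} {r0 : Fin n → ℝ} {r : Fin k → Fin n → ℝ}

lemma crpR_pos {s : Fin k → ℝ} {i : Fin n} (hS0 : 0 ≤ S0) (hr0 : 0 ≤ r0 i)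
    (hr : ∀ j, 0 ≤ r j i) (hrpos : 0 < ∑ j, r j i) (hs : ∀ j, 0 < s j) :
    0 < crpR S0 r0 r s i := by
  obtain ⟨j, hj, hrj⟩ := (Finset.sum_pos_iff_of_nonneg fun j _ => hr j).mp hrpos
  have hsum : 0 < ∑ j, r j i * s j :=
    Finset.sum_pos' (fun l _ => mul_nonneg (hr l) (hs l).le) ⟨j, hj, mul_pos hrj (hs j)⟩
  exact add_pos_of_nonneg_of_pos (mul_nonneg hr0 hS0) hsum

variable (S0 r0 r) in
lemma measurable_crpR_toNNReal :
    Measurable fun (s : Fin k → ℝ) i => (crpR S0 r0 r s i).toNNReal := by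
  unfold crpR
  fun_prop

variable (S0 r0 r) in
lemma crpMeasure_eq_compProd (α β : Fin k → ℝ) :
    crpMeasure S0 r0 r α β = (Measure.pi fun j => gammaMeasure (α j) (β j)⁻¹) ⊗ₘ
      poissonPiKernel _ (measurable_crpR_toNNReal S0 r0 r) := by
  rw [Measure.compProd_eq_comp_prod]
  refine congrArg (Measure.bind _) (funext fun s => ?_)
  rw [Kernel.prod_apply, Kernel.id_apply, Measure.dirac_prod, poissonPiKernel_apply]

theorem crp_loss_pos_iff_general (ν : Fin n → ℕ) (hS0 : 0 ≤ S0)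
    (hr0 : ∀ i, 0 ≤ r0 i) (hr : ∀ j i, 0 ≤ r j i) (hrpos : ∀ i, 0 < ∑ j, r j i)
    {α β : Fin k → ℝ} (hα : ∀ j, 0 < α j) (hβ : ∀ j, 0 < β j) (t : ℕ) :
    0 < (crpMeasure S0 r0 r α β) {x | crpLoss ν x = t} ↔
      ∃ u : Fin n → ℕ, ∑ j, ν j * u j = t := by
  constructor
  · intro hpos
    obtain ⟨x, hx⟩ := nonempty_of_measure_ne_zero hpos.ne'
    exact ⟨x.2, hx⟩
  · rintro ⟨u, hu⟩
    have (j : Fin k) : IsProbabilityMeasure (gammaMeasure (α j) (β j)⁻¹) :=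
      isProbabilityMeasure_gammaMeasure (hα j) (inv_pos.mpr (hβ j))
    rw [crpMeasure_eq_compProd]
    refine compProd_pos_of_frequently_pos (Filter.Eventually.frequently ?_)
    filter_upwards [ae_pi_gammaMeasure_pos α fun j => (β j)⁻¹] with s hs
    have hrate (i : Fin n) : 0 < (crpR S0 r0 r s i).toNNReal :=
      Real.toNNReal_pos.mpr (crpR_pos hS0 (hr0 i) (hr · i) (hrpos i) hs)
    exact poissonPiKernel_pos_of_nonempty _ hrate ⟨u, hu⟩

end CreditRisk

/-- `P_α[L = t] > 0` iff `t` is representable as `∑_j ν_j u_j` with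
nonnegative integers `u_j`. -/
theorem crp_loss_pos_iff {n k : ℕ} (hn : 0 < n) (hk : 0 < k)
    (ν : Fin n → ℕ) (hν : ∀ i, 0 < ν i)
    (S0 : ℝ) (hS0 : 0 ≤ S0)
    (r0 : Fin n → ℝ) (r : Fin k → Fin n → ℝ)
    (hr0 : ∀ i, 0 ≤ r0 i) (hr : ∀ j i, 0 ≤ r j i)
    (hr0sum : ∑ i, r0 i = 1) (hrsum : ∀ j, ∑ i, r j i = 1)
    (hrpos : ∀ i, 0 < ∑ j, r j i)
    (α β : Fin k → ℝ) (hα : ∀ j, 0 < α j) (hβ : ∀ j, 0 < β j)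
    (t : ℕ) :
    0 < (crpMeasure S0 r0 r α β) {x | crpLoss ν x = t} ↔
      ∃ u : Fin n → ℕ, ∑ j, ν j * u j = t :=
  crp_loss_pos_iff_general ν hS0 hr0 hr hrpos hα hβ t
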